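/- The strong separation condition fails for {S_i}_{i=1}^m if and only if there exist infinite sequences of finite words (α_k)_{k≥0} and (β_k)_{k≥0} over {1,…,m} with 1 ≤ p_{α_k}, p_{β_k} ≤ 2T−1 for all k, with α₀ and β₀ single letters and α₀ ≠ β₀, such that the sequence (q_k, c_k)_{k≥1} with the recursive structure w.r.t. ({α_k},{β_k}) satisfies (q_k, c_k) ∈ Ξ for all k ≥ 1. -/

import Mathlib

open Polynomial Filter

noncomputable section

namespace PVOSC

variable {m : ℕ}

/-- `λ⁻¹` is a Pisot (P.V.) number: an algebraic integer `> 1` all of whose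
Galois conjugates other than itself have complex absolute value `< 1`. -/
def IsPisot (θ : ℝ) : Prop :=
  1 < θ ∧ IsIntegral ℤ θ ∧
    ∀ z : ℂ, aeval z (minpoly ℤ θ) = 0 → z ≠ (θ : ℂ) → ‖z‖ < 1

/-- `p_σ` for a finite word `σ`. -/
def wordP (p : Fin m → ℕ) (σ : List (Fin m)) : ℕ := (σ.map p).sum

/-- The contracting similitude `S_i(x) = λ^{p_i} x + b_i`. -/
def Smap (lam : ℝ) (p : Fin m → ℕ) (b : Fin m → ℝ) (i : Fin m) : ℝ → ℝ :=
  fun x => lam ^ p i * x + b i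

/-- `S_σ = S_{i₁} ∘ ⋯ ∘ S_{i_k}` for `σ = i₁ ⋯ i_k`. -/
def SW (lam : ℝ) (p : Fin m → ℕ) (b : Fin m → ℝ) (σ : List (Fin m)) : ℝ → ℝ :=
  σ.foldr (fun i f => Smap lam p b i ∘ f) id

/-- `b_σ`, the translation part of `S_σ`. -/
def wordB (lam : ℝ) (p : Fin m → ℕ) (b : Fin m → ℝ) (σ : List (Fin m)) : ℝ :=
  SW lam p b σ 0

/-- `B = {0, b₁, …, b_m}`. -/
def Bset (b : Fin m → ℝ) : Set ℝ := insert 0 (Set.range b)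

/-- `B − B`. -/
def BB (b : Fin m → ℝ) : Set ℝ := {x | ∃ u ∈ Bset b, ∃ v ∈ Bset b, x = u - v}

/-- `max_i |b_i|`. -/
def bmax (b : Fin m → ℝ) : ℝ := ⨆ i, |b i|

/-- The set `𝒞`. -/
def Cset (lam : ℝ) (b : Fin m → ℝ) (T : ℕ) : Set ℝ :=
  {x | |x| ≤ (1 + lam ^ (1 - (T : ℤ))) * bmax b / (1 - lam) ∧
    ∃ R : ℝ[X], (∀ n, R.coeff n ∈ BB b) ∧ lam ^ (2 - (T : ℤ)) * x = R.eval lam⁻¹}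

/-- The vertex set `Ξ = {n ∈ ℤ : |n| ≤ T−1} × 𝒞`. -/
def Xi (lam : ℝ) (b : Fin m → ℝ) (T : ℕ) : Set (ℤ × ℝ) :=
  {v | |v.1| ≤ (T : ℤ) - 1 ∧ v.2 ∈ Cset lam b T}

/-- The open set condition. -/
def OSC (lam : ℝ) (p : Fin m → ℕ) (b : Fin m → ℝ) : Prop :=
  ∃ U : Set ℝ, U.Nonempty ∧ IsOpen U ∧ (⋃ i, Smap lam p b i '' U) ⊆ U ∧
    ∀ i j : Fin m, i ≠ j → Smap lam p b i '' U ∩ Smap lam p b j '' U = ∅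

/-- The strong separation condition for the attractor `E`. -/
def SSC (lam : ℝ) (p : Fin m → ℕ) (b : Fin m → ℝ) (E : Set ℝ) : Prop :=
  ∀ i j : Fin m, i ≠ j → Smap lam p b i '' E ∩ Smap lam p b j '' E = ∅

/-- Group law on `ℤ × ℝ`: `(p₁,c₁)·(p₂,c₂) = (p₁+p₂, λ^{p₁} c₂ + c₁)`. -/
def gmul (lam : ℝ) (u v : ℤ × ℝ) : ℤ × ℝ := (u.1 + v.1, lam ^ u.1 * v.2 + u.2)

/-- Inverse for the group law: `(p,c)⁻¹ = (−p, −λ^{−p} c)`. -/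
def ginv (lam : ℝ) (u : ℤ × ℝ) : ℤ × ℝ := (-u.1, -(lam ^ (-u.1) * u.2))

/-- The group element `(p_σ, b_σ)` associated to a finite word `σ`. -/
def elem (lam : ℝ) (p : Fin m → ℕ) (b : Fin m → ℝ) (σ : List (Fin m)) : ℤ × ℝ :=
  ((wordP p σ : ℤ), wordB lam p b σ)

/-- The sequence `(q_k, c_k)` with the recursive structure w.r.t. `({α_k}, {β_k})`:
`recSeq … k = (q_{k+1}, c_{k+1})`, i.e. index `k` corresponds to `(q_{k+1}, c_{k+1})`. -/
def recSeq (lam : ℝ) (p : Fin m → ℕ) (b : Fin m → ℝ) (α β : ℕ → List (Fin m)) : ℕ → ℤ × ℝ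
  | 0 => gmul lam (ginv lam (elem lam p b (β 0))) (elem lam p b (α 0))
  | (k+1) => gmul lam (ginv lam (elem lam p b (β (k+1))))
      (gmul lam (recSeq lam p b α β k) (elem lam p b (α (k+1))))

/-- The edge relation of the directed graph `G` on `Ξ`. -/
def edge (lam : ℝ) (p : Fin m → ℕ) (b : Fin m → ℝ) (T : ℕ) (u v : ℤ × ℝ) : Prop :=
  u ∈ Xi lam b T ∧ v ∈ Xi lam b T ∧
    ∃ α β : List (Fin m), 1 ≤ wordP p α ∧ wordP p α ≤ 2 * T - 1 ∧
      1 ≤ wordP p β ∧ wordP p β ≤ 2 * T - 1 ∧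
      v.1 = (wordP p α : ℤ) + u.1 - (wordP p β : ℤ) ∧
      v.2 = lam ^ (-(wordP p β : ℤ)) * u.2 + lam ^ (u.1 - (wordP p β : ℤ)) * wordB lam p b α
        - lam ^ (-(wordP p β : ℤ)) * wordB lam p b β

/-- `Λ = Ξ ∩ {(p_j − p_i, λ^{−p_i}(b_j − b_i)) : i ≠ j}`. -/
def Lam (lam : ℝ) (p : Fin m → ℕ) (b : Fin m → ℝ) (T : ℕ) : Set (ℤ × ℝ) :=
  Xi lam b T ∩ {v | ∃ i j : Fin m, i ≠ j ∧
    v = ((p j : ℤ) - (p i : ℤ), lam ^ (-(p i : ℤ)) * (b j - b i))}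

/-- The length-`k` prefix of an infinite word `ω`. -/
def prefixList (ω : ℕ → Fin m) (k : ℕ) : List (Fin m) := (List.range k).map ω

/-!
Each word `σ` acts on `ℝ` as the element `(p_σ, b_σ)` of the group `ℤ × ℝ`, acting by
`(q, c) • x = λ^q x + c`, and the recursion telescopes: with `A_k = α₀⋯α_k` and `B_k = β₀⋯β_k` the
`k`-th term is the group element of `S_{B_k}⁻¹ ∘ S_{A_k}`.

If `S_i(E)` and `S_j(E)` share a point `x`, cut a coding of `x` in each piece at the levels
`T, 2T, 3T, …` of the exponent. The prefixes `A_k`, `B_k` then have exponents differing by less than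
`T`, and `S_{A_k}(y) = S_{B_k}(z) = x` with `y, z ∈ E`, so the translation part `z - λ^q y` of
`S_{B_k}⁻¹ ∘ S_{A_k}` is bounded. It is a polynomial in `λ⁻¹` because `b_σ` is a polynomial in `λ`
of degree less than `p_σ`, whose coefficients get reflected.

Conversely, if all terms lie in `Ξ`, the maps `S_{B_k}⁻¹ ∘ S_{A_k}` move a given point of `E` by a
bounded amount, so `S_{A_k}` and `S_{B_k}` become arbitrarily close at that point; hence the compact
sets `S_i(E)` and `S_j(E)` meet.
-/

open scoped Pointwise in
theorem inter_nonempty_of_tendsto_sub_zero {G ι : Type*} [AddGroup G] [TopologicalSpace G]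
    [IsTopologicalAddGroup G] {l : Filter ι} [l.NeBot] {K L : Set G} (hK : IsClosed K)
    (hL : IsCompact L) {u v : ι → G} (hu : ∀ n, u n ∈ K) (hv : ∀ n, v n ∈ L)
    (huv : Tendsto (fun n => u n - v n) l (nhds 0)) : (K ∩ L).Nonempty := by
  have isClosed_sub : IsClosed (K - L) :=
    sub_eq_add_neg K L ▸ hK.add_right_of_isCompact hL.neg
  have zero_mem_sub : (0 : G) ∈ K - L :=
    isClosed_sub.mem_of_tendsto huv (.of_forall fun n => Set.sub_mem_sub (hu n) (hv n))
  exact Set.not_disjoint_iff_nonempty_inter.1 (Set.zero_mem_sub_iff.1 zero_mem_sub)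

theorem eval_inv_reflect {K : Type*} [Field K] {x : K} (hx : x ≠ 0) {N : ℕ} {f : K[X]}
    (hf : f.natDegree ≤ N) : (reflect N f).eval x⁻¹ = (x ^ N)⁻¹ * f.eval x := by
  let := invertibleOfNonzero hx
  have h := eval₂_reflect_mul_pow (RingHom.id K) x N f hf
  rw [invOf_eq_inv] at h
  rw [eval, eval, ← h]
  field_simp

section Blocks

variable {ι : Type*}

/-- The concatenation `α₀ α₁ ⋯ α_k` of the first `k + 1` blocks of a sequence of words. -/
def blockPrefix (α : ℕ → List ι) : ℕ → List ι
  | 0 => α 0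
  | k + 1 => blockPrefix α k ++ α (k + 1)

theorem prefix_blockPrefix (α : ℕ → List ι) (k : ℕ) : α 0 <+: blockPrefix α k := by
  induction k with
  | zero => exact List.prefix_rfl
  | succ k ih => exact ih.trans (List.prefix_append _ _)

theorem exists_blocks_of_forall_exists_append {P : ℕ → List ι → Prop} {σ : List ι} (base : P 0 σ)
    (step : ∀ k A, P k A → ∃ τ, P (k + 1) (A ++ τ)) :
    ∃ α : ℕ → List ι, α 0 = σ ∧ ∀ k, P k (blockPrefix α k) := by
  choose! next hnext using step
  let A : ℕ → List ι := fun k => Nat.rec σ (fun k A => A ++ next k A) k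
  let α : ℕ → List ι
    | 0 => σ
    | k + 1 => next k (A k)
  have blockPrefix_eq (k : ℕ) : blockPrefix α k = A k := by
    induction k with
    | zero => rfl
    | succ k ih => rw [blockPrefix, ih]
  refine ⟨α, rfl, fun k => ?_⟩
  rw [blockPrefix_eq]
  induction k with
  | zero => exact base
  | succ k ih => exact hnext k _ ih

end Blocks

section Words

variable (lam : ℝ) (p : Fin m → ℕ) (b : Fin m → ℝ)

theorem wordP_nil : wordP p [] = 0 := rfl

theorem wordP_cons (i : Fin m) (σ : List (Fin m)) : wordP p (i :: σ) = p i + wordP p σ := by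
  simp [wordP]

theorem wordP_singleton (i : Fin m) : wordP p [i] = p i := by
  simp [wordP]

theorem wordP_append (σ τ : List (Fin m)) : wordP p (σ ++ τ) = wordP p σ + wordP p τ := by
  simp [wordP]

theorem SW_singleton (i : Fin m) : SW lam p b [i] = Smap lam p b i := rfl

theorem SW_append (σ τ : List (Fin m)) (x : ℝ) :
    SW lam p b (σ ++ τ) x = SW lam p b σ (SW lam p b τ x) := by
  induction σ with
  | nil => rfl
  | cons i σ ih => exact congrArg (Smap lam p b i) ih

theorem wordB_cons (i : Fin m) (σ : List (Fin m)) :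
    wordB lam p b (i :: σ) = lam ^ p i * wordB lam p b σ + b i := rfl

theorem SW_apply (σ : List (Fin m)) (x : ℝ) :
    SW lam p b σ x = lam ^ wordP p σ * x + wordB lam p b σ := by
  induction σ with
  | nil => simp [wordP, wordB, SW]
  | cons i σ ih =>
    calc SW lam p b (i :: σ) x = lam ^ p i * SW lam p b σ x + b i := rfl
      _ = lam ^ wordP p (i :: σ) * x + wordB lam p b (i :: σ) := by
        rw [ih, wordP_cons, wordB_cons, pow_add]; ring

theorem SW_sub_SW (σ : List (Fin m)) (x y : ℝ) :
    SW lam p b σ x - SW lam p b σ y = lam ^ wordP p σ * (x - y) := by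
  rw [SW_apply, SW_apply]; ring

theorem wordB_append (σ τ : List (Fin m)) :
    wordB lam p b (σ ++ τ) = lam ^ wordP p σ * wordB lam p b τ + wordB lam p b σ := by
  rw [wordB, SW_append, SW_apply, ← wordB]

theorem continuous_Smap (i : Fin m) : Continuous (Smap lam p b i) := by
  unfold Smap; fun_prop

variable {p}

theorem lt_wordP_blockPrefix {α : ℕ → List (Fin m)} (hα : ∀ k, 1 ≤ wordP p (α k)) (k : ℕ) :
    k < wordP p (blockPrefix α k) := by
  induction k with
  | zero => exact hα 0
  | succ k ih =>
    have := hα (k + 1)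
    rw [blockPrefix, wordP_append]
    lia

end Words

section Group

variable {lam : ℝ}

/-- The action of the group `ℤ × ℝ` on `ℝ` by the affine maps `x ↦ λ^q x + c`. -/
def affineAct (lam : ℝ) (v : ℤ × ℝ) (x : ℝ) : ℝ := lam ^ v.1 * x + v.2

theorem gmul_assoc (hlam : lam ≠ 0) (u v w : ℤ × ℝ) :
    gmul lam (gmul lam u v) w = gmul lam u (gmul lam v w) := by
  ext
  · simp only [gmul]; ring
  · simp only [gmul, zpow_add₀ hlam]; ring

theorem ginv_gmul (hlam : lam ≠ 0) (u v : ℤ × ℝ) :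
    ginv lam (gmul lam u v) = gmul lam (ginv lam v) (ginv lam u) := by
  ext
  · simp only [gmul, ginv]; ring
  · simp only [gmul, ginv, neg_add, zpow_add₀ hlam, zpow_neg]
    field_simp
    ring

theorem affineAct_gmul (hlam : lam ≠ 0) (u v : ℤ × ℝ) (x : ℝ) :
    affineAct lam (gmul lam u v) x = affineAct lam u (affineAct lam v x) := by
  simp only [affineAct, gmul, zpow_add₀ hlam]; ring

theorem affineAct_ginv_eq_iff (hlam : lam ≠ 0) (u : ℤ × ℝ) (x y : ℝ) :
    affineAct lam (ginv lam u) x = y ↔ x = affineAct lam u y := by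
  simp only [affineAct, ginv, zpow_neg]
  field_simp
  constructor <;> intro h <;> linarith

variable (p : Fin m → ℕ) (b : Fin m → ℝ)

theorem affineAct_elem (σ : List (Fin m)) (x : ℝ) :
    affineAct lam (elem lam p b σ) x = SW lam p b σ x := by
  rw [SW_apply, affineAct, elem, zpow_natCast]

theorem elem_append (σ τ : List (Fin m)) :
    elem lam p b (σ ++ τ) = gmul lam (elem lam p b σ) (elem lam p b τ) := by
  simp only [elem, gmul, wordP_append, wordB_append, Nat.cast_add, zpow_natCast]

theorem affineAct_ginv_gmul_elem_eq_iff (hlam : lam ≠ 0) (A B : List (Fin m)) (y z : ℝ) :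
    affineAct lam (gmul lam (ginv lam (elem lam p b B)) (elem lam p b A)) y = z ↔
      SW lam p b A y = SW lam p b B z := by
  rw [affineAct_gmul hlam, affineAct_ginv_eq_iff hlam, affineAct_elem, affineAct_elem]

theorem recSeq_eq_gmul_blockPrefix (hlam : lam ≠ 0) (α β : ℕ → List (Fin m)) (k : ℕ) :
    recSeq lam p b α β k = gmul lam (ginv lam (elem lam p b (blockPrefix β k)))
      (elem lam p b (blockPrefix α k)) := by
  induction k with
  | zero => rfl
  | succ k ih =>
    simp only [recSeq, ih, blockPrefix, elem_append, ginv_gmul hlam, gmul_assoc hlam]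

end Group

section WordPolynomial

variable {lam : ℝ} {p : Fin m → ℕ} {b : Fin m → ℝ}

/-- The polynomial in `λ` whose value is the translation part `b_σ` of `S_σ`. -/
def wordPoly (p : Fin m → ℕ) (b : Fin m → ℝ) : List (Fin m) → ℝ[X]
  | [] => 0
  | i :: σ => X ^ p i * wordPoly p b σ + C (b i)

theorem eval_wordPoly (σ : List (Fin m)) : (wordPoly p b σ).eval lam = wordB lam p b σ := by
  induction σ with
  | nil => simp [wordPoly, wordB, SW]
  | cons i σ ih => simp [wordPoly, wordB_cons, ih]

theorem coeff_wordPoly_mem_Bset (hp : ∀ i, 1 ≤ p i) (σ : List (Fin m)) (n : ℕ) :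
    (wordPoly p b σ).coeff n ∈ Bset b := by
  induction σ generalizing n with
  | nil => exact Set.mem_insert _ _
  | cons i σ ih =>
    have := hp i
    rw [wordPoly, coeff_add, coeff_X_pow_mul', coeff_C]
    rcases n.eq_zero_or_pos with rfl | hn
    · rw [if_neg (by lia), if_pos rfl, zero_add]
      exact Set.mem_insert_of_mem _ ⟨i, rfl⟩
    · rw [if_neg hn.ne', add_zero]
      split_ifs
      · exact ih _
      · exact Set.mem_insert _ _

theorem degree_wordPoly_lt (hp : ∀ i, 1 ≤ p i) (σ : List (Fin m)) :
    (wordPoly p b σ).degree < wordP p σ := by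
  induction σ with
  | nil => simp [wordPoly, wordP_nil]
  | cons i σ ih =>
    rw [degree_lt_iff_coeff_zero] at ih ⊢
    intro n hn
    have := hp i
    rw [wordP_cons] at hn
    rw [wordPoly, coeff_add, coeff_X_pow_mul', coeff_C, if_pos (by lia), if_neg (by lia),
      ih _ (by lia), add_zero]

theorem exists_eval_inv_eq_wordB_sub_wordB (hlam : lam ≠ 0) (hp : ∀ i, 1 ≤ p i)
    {A B : List (Fin m)} {N : ℕ} (hA : wordP p A ≤ N + 1) (hB : wordP p B ≤ N + 1) :
    ∃ R : ℝ[X], (∀ n, R.coeff n ∈ BB b) ∧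
      R.eval lam⁻¹ = (lam ^ N)⁻¹ * (wordB lam p b A - wordB lam p b B) := by
  have natDegree_le {σ : List (Fin m)} (hσ : wordP p σ ≤ N + 1) :
      (wordPoly p b σ).natDegree ≤ N :=
    natDegree_le_iff_coeff_eq_zero.2 fun n hn =>
      (degree_lt_iff_coeff_zero _ _).1 (degree_wordPoly_lt hp σ) n (by lia)
  refine ⟨reflect N (wordPoly p b A - wordPoly p b B), fun n => ?_, ?_⟩
  · rw [coeff_reflect, coeff_sub]
    exact ⟨_, coeff_wordPoly_mem_Bset hp A _, _, coeff_wordPoly_mem_Bset hp B _, rfl⟩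
  · rw [eval_inv_reflect hlam (natDegree_sub_le_of_le (natDegree_le hA) (natDegree_le hB) |>.trans
      (max_self N).le), eval_sub, eval_wordPoly, eval_wordPoly]

end WordPolynomial

section Attractor

variable {lam : ℝ} {p : Fin m → ℕ} {b : Fin m → ℝ} {T : ℕ} {E : Set ℝ}

theorem SW_mem_of_iUnion_subset (hE : ⋃ i, Smap lam p b i '' E ⊆ E) (σ : List (Fin m)) {x : ℝ}
    (hx : x ∈ E) : SW lam p b σ x ∈ E := by
  induction σ with
  | nil => exact hx
  | cons i σ ih => exact hE (Set.mem_iUnion_of_mem i ⟨_, ih, rfl⟩)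

theorem SW_blockPrefix_mem_image (hE : ⋃ i, Smap lam p b i '' E ⊆ E) {α : ℕ → List (Fin m)}
    {i : Fin m} (hα : α 0 = [i]) (k : ℕ) {x : ℝ} (hx : x ∈ E) :
    SW lam p b (blockPrefix α k) x ∈ Smap lam p b i '' E := by
  obtain ⟨τ, hτ⟩ := prefix_blockPrefix α k
  rw [← hτ, hα, SW_append, SW_singleton]
  exact Set.mem_image_of_mem _ (SW_mem_of_iUnion_subset hE τ hx)

theorem abs_le_of_mem_of_subset_iUnion (hlam0 : 0 < lam) (hlam1 : lam < 1) (hp : ∀ i, 1 ≤ p i)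
    (hEc : IsCompact E) (hE : E ⊆ ⋃ i, Smap lam p b i '' E) {x : ℝ} (hx : x ∈ E) :
    |x| ≤ bmax b / (1 - lam) := by
  obtain ⟨y, hy, hmax⟩ := hEc.exists_isMaxOn ⟨x, hx⟩ continuous_abs.continuousOn
  obtain ⟨i, z, hz, hzy⟩ := Set.mem_iUnion.1 (hE hy)
  have abs_b_le : |b i| ≤ bmax b := le_ciSup (f := fun i => |b i|) (Set.finite_range _).bddAbove i
  have pow_le : lam ^ p i ≤ lam := pow_le_of_le_one hlam0.le hlam1.le (by have := hp i; lia)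
  have abs_y_le : |y| ≤ lam * |y| + bmax b :=
    calc |y| = |lam ^ p i * z + b i| := by rw [← hzy, Smap]
      _ ≤ |lam ^ p i * z| + |b i| := abs_add_le _ _
      _ = lam ^ p i * |z| + |b i| := by rw [abs_mul, abs_of_pos (pow_pos hlam0 _)]
      _ ≤ lam * |y| + bmax b :=
        add_le_add (mul_le_mul pow_le (hmax hz) (abs_nonneg _) hlam0.le) abs_b_le
  calc |x| ≤ |y| := hmax hx
    _ ≤ bmax b / (1 - lam) := by rw [le_div_iff₀ (by linarith)]; linarith

theorem exists_word_of_mem (hp : ∀ i, 1 ≤ p i) (hpT : ∀ i, p i ≤ T)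
    (hE : E ⊆ ⋃ i, Smap lam p b i '' E) {x : ℝ} (hx : x ∈ E) (n : ℕ) :
    ∃ σ : List (Fin m), wordP p σ ∈ Set.Ioc n (n + T) ∧ x ∈ SW lam p b σ '' E := by
  induction n with
  | zero =>
    obtain ⟨i, hi⟩ := Set.mem_iUnion.1 (hE hx)
    refine ⟨[i], ?_, hi⟩
    rw [wordP_singleton, zero_add]
    exact ⟨hp i, hpT i⟩
  | succ n ih =>
    obtain ⟨σ, ⟨hnσ, hσn⟩, y, hy, hyx⟩ := ih
    by_cases hσ : n + 1 < wordP p σ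
    · exact ⟨σ, ⟨hσ, by lia⟩, y, hy, hyx⟩
    · obtain ⟨i, z, hz, hzy⟩ := Set.mem_iUnion.1 (hE hy)
      have := hp i
      have := hpT i
      refine ⟨σ ++ [i], ?_, z, hz, by rw [SW_append, SW_singleton, hzy, hyx]⟩
      rw [wordP_append, wordP_singleton]
      constructor <;> lia

theorem exists_blocks_of_mem_image (hp : ∀ i, 1 ≤ p i) (hpT : ∀ i, p i ≤ T)
    (hE : E ⊆ ⋃ i, Smap lam p b i '' E) {i : Fin m} {x : ℝ} (hx : x ∈ Smap lam p b i '' E) :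
    ∃ α : ℕ → List (Fin m), α 0 = [i] ∧ ∀ k,
      wordP p (blockPrefix α k) ∈ Set.Ioc (k * T) ((k + 1) * T) ∧
        x ∈ SW lam p b (blockPrefix α k) '' E := by
  refine exists_blocks_of_forall_exists_append
    (P := fun k A => wordP p A ∈ Set.Ioc (k * T) ((k + 1) * T) ∧ x ∈ SW lam p b A '' E) ⟨?_, hx⟩ ?_
  · rw [wordP_singleton, zero_mul, zero_add, one_mul]
    exact ⟨hp i, hpT i⟩
  · rintro k A ⟨⟨_, hAk⟩, y, hy, rfl⟩
    obtain ⟨τ, ⟨hlt, hle⟩, z, hz, rfl⟩ := exists_word_of_mem hp hpT hE hy ((k + 1) * T - wordP p A)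
    refine ⟨τ, ?_, z, hz, SW_append lam p b A τ z⟩
    rw [wordP_append, add_one_mul (k + 1)]
    constructor <;> lia

theorem wordP_block_mem_Icc {α : ℕ → List (Fin m)}
    (hα : ∀ k, wordP p (blockPrefix α k) ∈ Set.Ioc (k * T) ((k + 1) * T)) (k : ℕ) :
    wordP p (α k) ∈ Set.Icc 1 (2 * T - 1) := by
  cases k with
  | zero =>
    obtain ⟨hlt, hle⟩ := hα 0
    rw [blockPrefix] at hlt hle
    constructor <;> lia
  | succ k =>
    obtain ⟨hlt, hle⟩ := hα k
    obtain ⟨hlt', hle'⟩ := hα (k + 1)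
    rw [blockPrefix, wordP_append] at hlt' hle'
    rw [add_one_mul] at hle hlt' hle'
    rw [add_one_mul k] at hle'
    constructor <;> lia

end Attractor

section Xi

variable {lam : ℝ} {p : Fin m → ℕ} {b : Fin m → ℝ} {T : ℕ} {E : Set ℝ}

theorem abs_snd_le_of_affineAct_eq (hlam0 : 0 < lam) (hlam1 : lam < 1) {n : ℤ} {v : ℤ × ℝ}
    {y z r : ℝ} (hv : n ≤ v.1) (hy : |y| ≤ r) (hz : |z| ≤ r) (hyz : affineAct lam v y = z) :
    |v.2| ≤ (1 + lam ^ n) * r := by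
  have pow_le : lam ^ v.1 ≤ lam ^ n :=
    zpow_le_zpow_right_of_le_one₀ hlam0 hlam1.le hv
  calc |v.2| = |z - lam ^ v.1 * y| := by rw [← hyz, affineAct, add_sub_cancel_left]
    _ ≤ |z| + |lam ^ v.1 * y| := abs_sub _ _
    _ = |z| + lam ^ v.1 * |y| := by rw [abs_mul, abs_of_pos (zpow_pos hlam0 _)]
    _ ≤ r + lam ^ n * r := by gcongr
    _ = (1 + lam ^ n) * r := by ring

theorem exists_eval_inv_eq_snd_gmul (hlam : lam ≠ 0) (hp : ∀ i, 1 ≤ p i) {A B : List (Fin m)}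
    (hT : 1 ≤ T) (hB : 1 ≤ wordP p B) (hAB : wordP p A < wordP p B + T) :
    ∃ R : ℝ[X], (∀ n, R.coeff n ∈ BB b) ∧
      lam ^ (2 - (T : ℤ)) * (gmul lam (ginv lam (elem lam p b B)) (elem lam p b A)).2 =
        R.eval lam⁻¹ := by
  obtain ⟨N, hN⟩ : ∃ N : ℕ, N + 2 = T + wordP p B := ⟨T + wordP p B - 2, by lia⟩
  obtain ⟨R, hR, hReval⟩ := exists_eval_inv_eq_wordB_sub_wordB (b := b) hlam hp
    (A := A) (B := B) (N := N) (by lia) (by lia)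
  refine ⟨R, hR, ?_⟩
  calc lam ^ (2 - (T : ℤ)) * (gmul lam (ginv lam (elem lam p b B)) (elem lam p b A)).2
      = lam ^ (2 - (T : ℤ)) * lam ^ (-(wordP p B : ℤ)) *
          (wordB lam p b A - wordB lam p b B) := by simp only [gmul, ginv, elem]; ring
    _ = lam ^ (-(N : ℤ)) * (wordB lam p b A - wordB lam p b B) := by
        rw [← zpow_add₀ hlam]; congr 2; lia
    _ = R.eval lam⁻¹ := by rw [hReval, zpow_neg, zpow_natCast]

theorem ginv_gmul_elem_mem_Xi (hlam0 : 0 < lam) (hlam1 : lam < 1) (hp : ∀ i, 1 ≤ p i)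
    (hEc : IsCompact E) (hE : E ⊆ ⋃ i, Smap lam p b i '' E) {A B : List (Fin m)}
    (hB : 1 ≤ wordP p B) (hAB : wordP p A < wordP p B + T) (hBA : wordP p B < wordP p A + T)
    {x : ℝ} (hxA : x ∈ SW lam p b A '' E) (hxB : x ∈ SW lam p b B '' E) :
    gmul lam (ginv lam (elem lam p b B)) (elem lam p b A) ∈ Xi lam b T := by
  obtain ⟨y, hy, rfl⟩ := hxA
  obtain ⟨z, hz, hzy⟩ := hxB
  have abs_le_of_mem {w : ℝ} (hw : w ∈ E) : |w| ≤ bmax b / (1 - lam) :=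
    abs_le_of_mem_of_subset_iUnion hlam0 hlam1 hp hEc hE hw
  refine ⟨?_, ?_, exists_eval_inv_eq_snd_gmul hlam0.ne' hp (by lia) hB hAB⟩
  · simp only [gmul, ginv, elem]
    rw [abs_le]
    lia
  · rw [mul_div_assoc]
    refine abs_snd_le_of_affineAct_eq hlam0 hlam1 ?_ (abs_le_of_mem hy) (abs_le_of_mem hz)
      ((affineAct_ginv_gmul_elem_eq_iff p b hlam0.ne' A B y z).2 hzy.symm)
    simp only [gmul, ginv, elem]
    lia

theorem abs_affineAct_le_of_mem_Xi (hlam0 : 0 < lam) (hlam1 : lam < 1) {v : ℤ × ℝ}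
    (hv : v ∈ Xi lam b T) (x : ℝ) :
    |affineAct lam v x| ≤
      lam ^ (1 - (T : ℤ)) * |x| + (1 + lam ^ (1 - (T : ℤ))) * bmax b / (1 - lam) := by
  have pow_le : lam ^ v.1 ≤ lam ^ (1 - (T : ℤ)) :=
    zpow_le_zpow_right_of_le_one₀ hlam0 hlam1.le (by linarith [(abs_le.1 hv.1).1])
  calc |affineAct lam v x| ≤ |lam ^ v.1 * x| + |v.2| := abs_add_le _ _
    _ = lam ^ v.1 * |x| + |v.2| := by rw [abs_mul, abs_of_pos (zpow_pos hlam0 _)]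
    _ ≤ _ := by gcongr; exact hv.2.1

theorem tendsto_SW_blockPrefix_sub (hlam0 : 0 < lam) (hlam1 : lam < 1) {α β : ℕ → List (Fin m)}
    (hβ : ∀ k, 1 ≤ wordP p (β k)) (hXi : ∀ k, recSeq lam p b α β k ∈ Xi lam b T) (x : ℝ) :
    Tendsto (fun k => SW lam p b (blockPrefix α k) x - SW lam p b (blockPrefix β k) x) atTop
      (nhds 0) := by
  set M := lam ^ (1 - (T : ℤ)) * |x| + (1 + lam ^ (1 - (T : ℤ))) * bmax b / (1 - lam)
  have SW_sub_eq (k : ℕ) : SW lam p b (blockPrefix α k) x - SW lam p b (blockPrefix β k) x =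
      lam ^ wordP p (blockPrefix β k) * (affineAct lam (recSeq lam p b α β k) x - x) := by
    rw [recSeq_eq_gmul_blockPrefix p b hlam0.ne',
      (affineAct_ginv_gmul_elem_eq_iff p b hlam0.ne' _ _ x _).1 rfl, SW_sub_SW]
  have norm_SW_sub_le (k : ℕ) :
      ‖SW lam p b (blockPrefix α k) x - SW lam p b (blockPrefix β k) x‖ ≤ lam ^ k * (M + |x|) := by
    rw [SW_sub_eq, norm_mul, norm_pow, Real.norm_of_nonneg hlam0.le]
    refine mul_le_mul (pow_le_pow_of_le_one hlam0.le hlam1.le (lt_wordP_blockPrefix hβ k).le) ?_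
      (norm_nonneg _) (pow_nonneg hlam0.le _)
    exact (abs_sub _ _).trans (by gcongr; exact abs_affineAct_le_of_mem_Xi hlam0 hlam1 (hXi k) x)
  refine squeeze_zero_norm norm_SW_sub_le ?_
  simpa using (tendsto_pow_atTop_nhds_zero_of_lt_one hlam0.le hlam1).mul_const (M + |x|)

end Xi

section Separation

variable {lam : ℝ} {p : Fin m → ℕ} {b : Fin m → ℝ} {T : ℕ} {E : Set ℝ}

theorem exists_blocks_of_mem_image_inter (hlam0 : 0 < lam) (hlam1 : lam < 1) (hp : ∀ i, 1 ≤ p i)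
    (hpT : ∀ i, p i ≤ T) (hEc : IsCompact E) (hE : E ⊆ ⋃ i, Smap lam p b i '' E) {i j : Fin m}
    {x : ℝ} (hx : x ∈ Smap lam p b i '' E ∩ Smap lam p b j '' E) :
    ∃ α β : ℕ → List (Fin m), α 0 = [i] ∧ β 0 = [j] ∧
      (∀ k, wordP p (α k) ∈ Set.Icc 1 (2 * T - 1) ∧ wordP p (β k) ∈ Set.Icc 1 (2 * T - 1)) ∧
        ∀ k, recSeq lam p b α β k ∈ Xi lam b T := by
  obtain ⟨α, hα0, hα⟩ := exists_blocks_of_mem_image hp hpT hE hx.1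
  obtain ⟨β, hβ0, hβ⟩ := exists_blocks_of_mem_image hp hpT hE hx.2
  refine ⟨α, β, hα0, hβ0, fun k => ⟨wordP_block_mem_Icc (fun k => (hα k).1) k,
    wordP_block_mem_Icc (fun k => (hβ k).1) k⟩, fun k => ?_⟩
  obtain ⟨⟨hαlt, hαle⟩, hxα⟩ := hα k
  obtain ⟨⟨hβlt, hβle⟩, hxβ⟩ := hβ k
  rw [add_one_mul] at hαle hβle
  rw [recSeq_eq_gmul_blockPrefix p b hlam0.ne']
  exact ginv_gmul_elem_mem_Xi hlam0 hlam1 hp hEc hE (by lia) (by lia) (by lia) hxα hxβ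

theorem image_inter_nonempty_of_recSeq_mem_Xi (hlam0 : 0 < lam) (hlam1 : lam < 1)
    (hEc : IsCompact E) (hEne : E.Nonempty) (hE : ⋃ i, Smap lam p b i '' E ⊆ E)
    {α β : ℕ → List (Fin m)} {i j : Fin m} (hα : α 0 = [i]) (hβ : β 0 = [j])
    (hβpos : ∀ k, 1 ≤ wordP p (β k)) (hXi : ∀ k, recSeq lam p b α β k ∈ Xi lam b T) :
    (Smap lam p b i '' E ∩ Smap lam p b j '' E).Nonempty := by
  obtain ⟨x, hx⟩ := hEne
  exact inter_nonempty_of_tendsto_sub_zero (hEc.image (continuous_Smap lam p b i)).isClosed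
    (hEc.image (continuous_Smap lam p b j)) (fun k => SW_blockPrefix_mem_image hE hα k hx)
    (fun k => SW_blockPrefix_mem_image hE hβ k hx)
    (tendsto_SW_blockPrefix_sub hlam0 hlam1 hβpos hXi x)

end Separation

theorem stmt9_general (lam : ℝ) (hlam0 : 0 < lam) (hlam1 : lam < 1)
    {m : ℕ} (p : Fin m → ℕ) (hp : ∀ i, 1 ≤ p i) (b : Fin m → ℝ)
    (T : ℕ) (hpT : ∀ i, p i ≤ T)
    (E : Set ℝ) (hEc : IsCompact E) (hEne : E.Nonempty)
    (hEfix : E = ⋃ i, Smap lam p b i '' E) :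
    ¬ SSC lam p b E ↔
      ∃ α β : ℕ → List (Fin m),
        (∀ k : ℕ, 1 ≤ wordP p (α k) ∧ wordP p (α k) ≤ 2 * T - 1 ∧
          1 ≤ wordP p (β k) ∧ wordP p (β k) ≤ 2 * T - 1) ∧
        (α 0).length = 1 ∧ (β 0).length = 1 ∧ α 0 ≠ β 0 ∧
        ∀ k : ℕ, recSeq lam p b α β k ∈ Xi lam b T := by
  constructor
  · intro hSSC
    simp only [SSC, not_forall, ← ne_eq, ← Set.nonempty_iff_ne_empty] at hSSC
    obtain ⟨i, j, hij, x, hx⟩ := hSSC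
    obtain ⟨α, β, hα, hβ, hbounds, hXi⟩ :=
      exists_blocks_of_mem_image_inter hlam0 hlam1 hp hpT hEc hEfix.subset hx
    exact ⟨α, β, fun k => ⟨(hbounds k).1.1, (hbounds k).1.2, (hbounds k).2.1, (hbounds k).2.2⟩,
      by simp [hα], by simp [hβ], by simpa [hα, hβ] using hij, hXi⟩
  · rintro ⟨α, β, hbounds, hα, hβ, hne, hXi⟩ hSSC
    obtain ⟨i, hi⟩ := List.length_eq_one_iff.1 hα
    obtain ⟨j, hj⟩ := List.length_eq_one_iff.1 hβ
    have hij : i ≠ j := by rintro rfl; exact hne (hi.trans hj.symm)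
    exact (image_inter_nonempty_of_recSeq_mem_Xi hlam0 hlam1 hEc hEne hEfix.superset hi hj
      (fun k => (hbounds k).2.2.1) hXi).ne_empty (hSSC i j hij)

theorem stmt9 (lam : ℝ) (hlam0 : 0 < lam) (hlam1 : lam < 1)
    (hPisot : IsPisot lam⁻¹)
    {m : ℕ} (hm : 2 ≤ m) (p : Fin m → ℕ) (hp : ∀ i, 1 ≤ p i)
    (b : Fin m → ℝ) (hbZ : ∀ i, ∃ z : ℤ, b i = (z : ℝ))
    (T : ℕ) (hT : T = Finset.univ.sup p)
    (E : Set ℝ) (hEc : IsCompact E) (hEne : E.Nonempty)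
    (hEfix : E = ⋃ i, Smap lam p b i '' E) :
    ¬ SSC lam p b E ↔
      ∃ α β : ℕ → List (Fin m),
        (∀ k : ℕ, 1 ≤ wordP p (α k) ∧ wordP p (α k) ≤ 2 * T - 1 ∧
          1 ≤ wordP p (β k) ∧ wordP p (β k) ≤ 2 * T - 1) ∧
        (α 0).length = 1 ∧ (β 0).length = 1 ∧ α 0 ≠ β 0 ∧
        ∀ k : ℕ, recSeq lam p b α β k ∈ Xi lam b T := by
  subst hT
  exact stmt9_general lam hlam0 hlam1 p hp b _ (fun i => Finset.le_sup (Finset.mem_univ i)) E hEc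
    hEne hEfix

end PVOSC
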